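/- Let G be a finite abelian group, and let G₀ ⊆ G be a minimal non-half-factorial LCN-set with min Δ(G₀) = max Δ*(G). Let g ∈ G₀ satisfy g ∈ ⟨G₀ \ {g}⟩, and let d ∈ [1, ord(g)] be minimal such that d·g ∈ ⟨E⟩ for some proper subset E ⊊ G₀ \ {g}. Then d divides ord(g), and for any two atoms A₁, A₂ over G₀ with v_g(A₁) ≡ v_g(A₂) (mod d), one has k(A₁) = k(A₂). -/

import Mathlib

open Multiset

section Defs

variable {G : Type*} [AddCommGroup G]

/-- `S` is a zero-sum sequence over `G₀`: a multiset with entries in `G₀` and sum `0`. -/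
def IsZeroSumSeq (G₀ : Set G) (S : Multiset G) : Prop :=
  (∀ x ∈ S, x ∈ G₀) ∧ S.sum = 0

/-- `S` is an atom over `G₀`: a nonempty zero-sum sequence over `G₀` that is not the
union of two nonempty zero-sum sequences over `G₀`. -/
def IsAtomSeq (G₀ : Set G) (S : Multiset G) : Prop :=
  IsZeroSumSeq G₀ S ∧ S ≠ 0 ∧
    ∀ A B : Multiset G, IsZeroSumSeq G₀ A → IsZeroSumSeq G₀ B →
      A ≠ 0 → B ≠ 0 → S ≠ A + B

/-- The set of lengths of `B`: all `k` such that `B` is a union of `k` atoms over `G₀`. -/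
def LengthSet (G₀ : Set G) (B : Multiset G) : Set ℕ :=
  {k | ∃ l : Multiset (Multiset G), Multiset.card l = k ∧
      (∀ A ∈ l, IsAtomSeq G₀ A) ∧ l.sum = B}

/-- The set of successive distances of a set of naturals. -/
def DeltaOf (L : Set ℕ) : Set ℕ :=
  {d | ∃ x ∈ L, ∃ y ∈ L, x < y ∧ y - x = d ∧ ∀ z ∈ L, ¬(x < z ∧ z < y)}

/-- The set of distances `Δ(G₀)`. -/
def DeltaSet (G₀ : Set G) : Set ℕ :=
  {d | ∃ B : Multiset G, IsZeroSumSeq G₀ B ∧ B ≠ 0 ∧ d ∈ DeltaOf (LengthSet G₀ B)}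

/-- `G₀` is half-factorial if `Δ(G₀) = ∅`. -/
def IsHalfFactorialSet (G₀ : Set G) : Prop := DeltaSet G₀ = ∅

/-- `G₀` is minimal non-half-factorial if `Δ(G₀) ≠ ∅` and every proper subset is
half-factorial. -/
def IsMinNonHalfFactorial (G₀ : Set G) : Prop :=
  (DeltaSet G₀).Nonempty ∧ ∀ G₁ : Set G, G₁ ⊂ G₀ → DeltaSet G₁ = ∅

/-- The cross number `k(S) = Σ 1/ord(g)` of a multiset over `G`. -/
noncomputable def crossNumber (S : Multiset G) : ℚ :=
  (S.map (fun g => ((addOrderOf g : ℚ))⁻¹)).sum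

/-- `G₀` is an LCN-set if every atom over `G₀` has cross number at least 1. -/
def IsLCNSet (G₀ : Set G) : Prop :=
  ∀ U : Multiset G, IsAtomSeq G₀ U → 1 ≤ crossNumber U

/-- A subset of `G \ {0}` is independent if any integral linear relation on its elements
has all summands zero. -/
def IsIndependentSet (E : Set G) : Prop :=
  (0 : G) ∉ E ∧ ∀ s : Finset G, ↑s ⊆ E → ∀ f : G → ℤ,
    (∑ e ∈ s, f e • e) = 0 → ∀ e ∈ s, f e • e = 0

/-- `d` is a greatest common divisor of the set `S` of naturals. -/
def IsSetGcd (S : Set ℕ) (d : ℕ) : Prop :=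
  (∀ s ∈ S, d ∣ s) ∧ ∀ e : ℕ, (∀ s ∈ S, e ∣ s) → e ∣ d

end Defs

/-- The set of minimal distances `Δ*(G)`. -/
def DeltaStar (G : Type*) [AddCommGroup G] : Set ℕ :=
  {d | ∃ G₀ : Set G, (DeltaSet G₀).Nonempty ∧ d = sInf (DeltaSet G₀)}

/-- The `p`-rank of a finite abelian group: `log_p` of the order of the `p`-torsion
subgroup `{x | p • x = 0}`. -/
noncomputable def pRank (G : Type*) [AddCommGroup G] (p : ℕ) : ℕ :=
  Nat.log p (Nat.card {x : G // p • x = 0})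

/-- The rank of a finite abelian group: the maximum of the `p`-ranks over all primes. -/
noncomputable def rankG (G : Type*) [AddCommGroup G] : ℕ :=
  sSup {r : ℕ | ∃ p : ℕ, p.Prime ∧ r = pRank G p}

section Helpers

variable {G : Type*} [AddCommGroup G]

lemma mem_msum {x : G} {X : Multiset (Multiset G)} : x ∈ X.sum ↔ ∃ Z ∈ X, x ∈ Z :=
  Multiset.mem_join

lemma crossNumber_add (A B : Multiset G) :
    crossNumber (A + B) = crossNumber A + crossNumber B := by
  simp [crossNumber]

lemma crossNumber_sum_of (l : Multiset (Multiset G)) (h : ∀ A ∈ l, crossNumber A = 1) :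
    crossNumber l.sum = Multiset.card l := by
  induction l using Multiset.induction_on with
  | empty => simp [crossNumber]
  | cons a s ih =>
    rw [Multiset.sum_cons, crossNumber_add, ih (fun A hA => h A (Multiset.mem_cons_of_mem hA)),
      h a (Multiset.mem_cons_self a s), Multiset.card_cons]
    push_cast; ring

lemma crossNumber_sum_ge (l : Multiset (Multiset G)) (h : ∀ A ∈ l, 1 ≤ crossNumber A) :
    (Multiset.card l : ℚ) ≤ crossNumber l.sum := by
  induction l using Multiset.induction_on with
  | empty => simp [crossNumber]
  | cons a s ih =>
    rw [Multiset.sum_cons, crossNumber_add, Multiset.card_cons]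
    have h1 := ih (fun A hA => h A (Multiset.mem_cons_of_mem hA))
    have h2 := h a (Multiset.mem_cons_self a s)
    push_cast; linarith

lemma zs_add {G₀ : Set G} {A B : Multiset G} (hA : IsZeroSumSeq G₀ A) (hB : IsZeroSumSeq G₀ B) :
    IsZeroSumSeq G₀ (A + B) := by
  refine ⟨fun x hx => ?_, by rw [Multiset.sum_add, hA.2, hB.2, add_zero]⟩
  rcases Multiset.mem_add.1 hx with h | h
  · exact hA.1 x h
  · exact hB.1 x h

lemma zs_sum {G₀ : Set G} (l : Multiset (Multiset G)) (h : ∀ A ∈ l, IsZeroSumSeq G₀ A) :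
    IsZeroSumSeq G₀ l.sum := by
  induction l using Multiset.induction_on with
  | empty => exact ⟨by simp, by simp⟩
  | cons a s ih =>
    rw [Multiset.sum_cons]
    exact zs_add (h a (Multiset.mem_cons_self a s))
      (ih (fun A hA => h A (Multiset.mem_cons_of_mem hA)))

lemma exists_fact (G₀ : Set G) : ∀ (n : ℕ) (B : Multiset G), Multiset.card B = n →
    IsZeroSumSeq G₀ B → ∃ l : Multiset (Multiset G), (∀ A ∈ l, IsAtomSeq G₀ A) ∧ l.sum = B := by
  intro n
  induction n using Nat.strong_induction_on with
  | _ n ih =>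
    intro B hn hB
    by_cases h0 : B = 0
    · exact ⟨0, by simp, by simp [h0]⟩
    by_cases hat : IsAtomSeq G₀ B
    · exact ⟨{B}, by simpa using hat, by simp⟩
    · unfold IsAtomSeq at hat
      push Not at hat
      obtain ⟨C, D, hC, hD, hC0, hD0, hBCD⟩ := hat hB h0
      have hc : 0 < Multiset.card C := Multiset.card_pos.2 hC0
      have hd : 0 < Multiset.card D := Multiset.card_pos.2 hD0
      have hcd : Multiset.card B = Multiset.card C + Multiset.card D := by
        rw [hBCD, Multiset.card_add]
      obtain ⟨l1, h1, h1s⟩ := ih (Multiset.card C) (by omega) C rfl hC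
      obtain ⟨l2, h2, h2s⟩ := ih (Multiset.card D) (by omega) D rfl hD
      refine ⟨l1 + l2, fun A hA => ?_, by rw [Multiset.sum_add, h1s, h2s, hBCD]⟩
      rcases Multiset.mem_add.1 hA with h | h
      · exact h1 A h
      · exact h2 A h

lemma gap_aux (L : Set ℕ) (p q : ℕ) (hp : p ∈ L) (hq : q ∈ L) (hpq : p < q) :
    ∃ e ∈ DeltaOf L, e ≤ q - p := by
  classical
  have hex : ∃ y, y ∈ L ∧ p < y := ⟨q, hq, hpq⟩
  have hs := Nat.find_spec hex
  refine ⟨Nat.find hex - p, ⟨p, hp, Nat.find hex, hs.1, hs.2, rfl, ?_⟩, ?_⟩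
  · rintro z hz ⟨h1, h2⟩
    exact Nat.find_min hex h2 ⟨hz, h1⟩
  · exact Nat.sub_le_sub_right (Nat.find_min' hex ⟨hq, hpq⟩) p

lemma gap_le {G₀ : Set G} {B : Multiset G} (hB : IsZeroSumSeq G₀ B) (hB0 : B ≠ 0) {p q : ℕ}
    (hp : p ∈ LengthSet G₀ B) (hq : q ∈ LengthSet G₀ B) (hpq : p < q) :
    ∃ e ∈ DeltaSet G₀, e ≤ q - p := by
  obtain ⟨e, he, hle⟩ := gap_aux _ p q hp hq hpq
  exact ⟨e, ⟨B, hB, hB0, he⟩, hle⟩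

lemma delta_pos {G₀ : Set G} {e : ℕ} (he : e ∈ DeltaSet G₀) : 1 ≤ e := by
  obtain ⟨B, _, _, x, _, y, _, hxy, hd, _⟩ := he
  omega

lemma atom_mono {G₀ G₁ : Set G} {A : Multiset G} (hA : IsAtomSeq G₀ A) (h : ∀ x ∈ A, x ∈ G₁) :
    IsAtomSeq G₁ A := by
  refine ⟨⟨h, hA.1.2⟩, hA.2.1, fun B C hB hC hB0 hC0 hABC => ?_⟩
  refine hA.2.2 B C ⟨fun x hx => hA.1.1 x ?_, hB.2⟩ ⟨fun x hx => hA.1.1 x ?_, hC.2⟩ hB0 hC0 hABC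
  · rw [hABC]; exact Multiset.mem_add.2 (Or.inl hx)
  · rw [hABC]; exact Multiset.mem_add.2 (Or.inr hx)

lemma atom_length_one {G₀ : Set G} {A : Multiset G} (hA : IsAtomSeq G₀ A)
    (l : Multiset (Multiset G)) (hl : ∀ X ∈ l, IsAtomSeq G₀ X) (hs : l.sum = A) :
    Multiset.card l = 1 := by
  induction l using Multiset.induction_on with
  | empty => exact absurd hs.symm (by simpa using hA.2.1)
  | cons a s _ =>
    by_cases h0 : s = 0
    · simp [h0]
    · exfalso
      obtain ⟨b, hb⟩ := Multiset.exists_mem_of_ne_zero h0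
      obtain ⟨t, rfl⟩ := Multiset.exists_cons_of_mem hb
      have hz : IsZeroSumSeq G₀ (b ::ₘ t).sum :=
        zs_sum _ (fun X hX => (hl X (Multiset.mem_cons_of_mem hX)).1)
      have hbne := (hl b (by simp)).2.1
      refine hA.2.2 a (b ::ₘ t).sum (hl a (by simp)).1 hz (hl a (by simp)).2.1 ?_ ?_
      · rw [Multiset.sum_cons]
        intro h
        exact hbne (by simpa using (add_eq_zero.1 h).1)
      · rw [← hs, Multiset.sum_cons]

lemma atom_replicate [Finite G] {G₀ : Set G} {a : G} (ha : a ∈ G₀) :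
    IsAtomSeq G₀ (Multiset.replicate (addOrderOf a) a) := by
  have hpos := addOrderOf_pos a
  refine ⟨⟨fun x hx => ?_, ?_⟩, ?_, ?_⟩
  · rw [Multiset.eq_of_mem_replicate hx]; exact ha
  · rw [Multiset.sum_replicate, addOrderOf_nsmul_eq_zero]
  · rw [← Multiset.card_pos, Multiset.card_replicate]; exact hpos
  · intro A B hA hB hA0 hB0 h
    have hAr : A = Multiset.replicate (Multiset.card A) a := by
      rw [Multiset.eq_replicate_card]
      intro b hb
      apply Multiset.eq_of_mem_replicate (n := addOrderOf a)
      rw [h]; exact Multiset.mem_add.2 (Or.inl hb)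
    have h1 := hA.2
    rw [hAr, Multiset.sum_replicate] at h1
    have h2 := Nat.le_of_dvd (Multiset.card_pos.2 hA0) (addOrderOf_dvd_of_nsmul_eq_zero h1)
    have h3 := congrArg Multiset.card h
    rw [Multiset.card_replicate, Multiset.card_add] at h3
    have := Multiset.card_pos.2 hB0
    omega

lemma atom_cross_one [Fintype G] {G₀ : Set G} (hmin : IsMinNonHalfFactorial G₀)
    {A : Multiset G} (hA : IsAtomSeq G₀ A) {x : G} (hx : x ∈ G₀) (hxA : x ∉ A) :
    crossNumber A = 1 := by
  set G₁ : Set G := {y | y ∈ A} with hG₁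
  have hsub : G₁ ⊂ G₀ :=
    ⟨fun y hy => hA.1.1 y hy, fun h => hxA (h hx)⟩
  have hD := hmin.2 G₁ hsub
  have hA1 : IsAtomSeq G₁ A := atom_mono hA (fun y hy => hy)
  set N := Fintype.card G with hN
  have hNpos : 0 < N := Fintype.card_pos
  have hlen1 : N ∈ LengthSet G₁ (N • A) := by
    refine ⟨Multiset.replicate N A, by simp, fun X hX => ?_, by simp⟩
    rw [Multiset.eq_of_mem_replicate hX]; exact hA1
  set l : Multiset (Multiset G) :=
    A.bind (fun a => Multiset.replicate (N / addOrderOf a)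
      (Multiset.replicate (addOrderOf a) a)) with hl
  have hsum : ∀ C : Multiset G, (C.bind (fun a => Multiset.replicate (N / addOrderOf a)
      (Multiset.replicate (addOrderOf a) a))).sum = N • C := by
    intro C
    induction C using Multiset.induction_on with
    | empty => simp
    | cons a s ih =>
      rw [Multiset.cons_bind, Multiset.sum_add, ih, Multiset.sum_replicate,
        Multiset.nsmul_replicate, Nat.div_mul_cancel (addOrderOf_dvd_card),
        ← Multiset.singleton_add a s, smul_add, Multiset.nsmul_singleton]
  have hcard : ∀ C : Multiset G, ((Multiset.card (C.bind (fun a =>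
      Multiset.replicate (N / addOrderOf a)
      (Multiset.replicate (addOrderOf a) a))) : ℕ) : ℚ) = N * crossNumber C := by
    intro C
    induction C using Multiset.induction_on with
    | empty => simp [crossNumber]
    | cons a s ih =>
      rw [Multiset.cons_bind, Multiset.card_add, Nat.cast_add, ih,
        ← Multiset.singleton_add a s, crossNumber_add, Multiset.card_replicate,
        Nat.cast_div (addOrderOf_dvd_card) (by exact_mod_cast (addOrderOf_pos a).ne')]
      simp [crossNumber, mul_add, div_eq_mul_inv, hN]
  have hlen2 : Multiset.card l ∈ LengthSet G₁ (N • A) := by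
    refine ⟨l, rfl, fun X hX => ?_, hsum A⟩
    obtain ⟨a, ha, hXa⟩ := Multiset.mem_bind.1 hX
    rw [Multiset.eq_of_mem_replicate hXa]
    exact atom_replicate ha
  have hz : IsZeroSumSeq G₁ (N • A) := by
    refine ⟨fun y hy => ?_, by rw [Multiset.sum_nsmul, hA.1.2, smul_zero]⟩
    exact Multiset.mem_of_mem_nsmul hy
  have hne : N • A ≠ 0 := by
    rw [← Multiset.card_pos, Multiset.card_nsmul]
    exact Nat.mul_pos hNpos (Multiset.card_pos.2 hA.2.1)
  have heq : Multiset.card l = N := by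
    rcases lt_trichotomy (Multiset.card l) N with h | h | h
    · obtain ⟨e, he, _⟩ := gap_le hz hne hlen2 hlen1 h
      rw [hD] at he; exact absurd he (by simp)
    · exact h
    · obtain ⟨e, he, _⟩ := gap_le hz hne hlen1 hlen2 h
      rw [hD] at he; exact absurd he (by simp)
  have := hcard A
  rw [← hl, heq] at this
  have hN0 : (N : ℚ) ≠ 0 := by exact_mod_cast hNpos.ne'
  field_simp at this
  exact this.symm

lemma atom_pm [Finite G] {x : G} {A : Multiset G} (hA : IsAtomSeq ({x, -x} : Set G) A) :
    A = Multiset.replicate (addOrderOf x) x ∨ A = Multiset.replicate (addOrderOf x) (-x) ∨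
      A = {x, -x} := by
  classical
  have key : ∀ B : Multiset G, IsZeroSumSeq ({x, -x} : Set G) B → B ≠ 0 → B ≤ A → A = B := by
    intro B hB hB0 hle
    obtain ⟨C, rfl⟩ := Multiset.le_iff_exists_add.1 hle
    by_contra hne
    have hC0 : C ≠ 0 := by rintro rfl; simp at hne
    refine hA.2.2 B C hB ⟨fun y hy => hA.1.1 y (Multiset.mem_add.2 (Or.inr hy)), ?_⟩ hB0 hC0 rfl
    have := hA.1.2
    rwa [Multiset.sum_add, hB.2, zero_add] at this
  have rep : ∀ y : G, y ∈ ({x, -x} : Set G) → (∀ z ∈ A, z = y) →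
      A = Multiset.replicate (addOrderOf y) y := by
    intro y hy h
    have hAr : A = Multiset.replicate (Multiset.card A) y := by
      rw [Multiset.eq_replicate_card]; exact h
    have h1 := hA.1.2
    rw [hAr, Multiset.sum_replicate] at h1
    have h2 := Nat.le_of_dvd (Multiset.card_pos.2 hA.2.1) (addOrderOf_dvd_of_nsmul_eq_zero h1)
    have hat := atom_replicate hy
    refine key _ hat.1 hat.2.1 ?_
    rw [hAr]
    exact Multiset.replicate_mono y h2
  by_cases h1 : ∀ z ∈ A, z = x
  · exact Or.inl (rep x (by simp) h1)
  by_cases h2 : ∀ z ∈ A, z = -x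
  · right; left
    have := rep (-x) (by simp) h2
    rwa [addOrderOf_neg] at this
  · right; right
    push Not at h1 h2
    obtain ⟨y, hy, hyx⟩ := h1
    obtain ⟨z, hz, hzx⟩ := h2
    have hy' : y = -x := by
      have := hA.1.1 y hy
      simp only [Set.mem_insert_iff, Set.mem_singleton_iff] at this
      tauto
    have hz' : z = x := by
      have := hA.1.1 z hz
      simp only [Set.mem_insert_iff, Set.mem_singleton_iff] at this
      tauto
    subst hy' hz'
    refine key _ ⟨?_, ?_⟩ ?_ ?_
    · intro w hw; simpa using hw
    · simp
    · simp
    · rw [Multiset.insert_eq_cons, Multiset.cons_le_of_notMem]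
      · exact ⟨hz, by simpa using hy⟩
      · simpa using fun h => hyx h.symm

lemma fact_pm [Finite G] [DecidableEq G] {x : G} (hx : -x ≠ x) (l : Multiset (Multiset G))
    (hl : ∀ A ∈ l, IsAtomSeq ({x, -x} : Set G) A) :
    ∃ a b c : ℕ, Multiset.card l = a + b + c ∧ l.sum.count x = addOrderOf x * a + c ∧
      l.sum.count (-x) = addOrderOf x * b + c := by
  induction l using Multiset.induction_on with
  | empty => exact ⟨0, 0, 0, by simp, by simp, by simp⟩
  | cons A s ih =>
    obtain ⟨a, b, c, h1, h2, h3⟩ := ih (fun A hA => hl A (Multiset.mem_cons_of_mem hA))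
    rw [Multiset.sum_cons, Multiset.card_cons, Multiset.count_add, Multiset.count_add, h1, h2, h3]
    rcases atom_pm (hl A (by simp)) with h | h | h
    · refine ⟨a + 1, b, c, by ring, ?_, ?_⟩
      · rw [h, Multiset.count_replicate_self]; ring
      · rw [h, Multiset.count_replicate, if_neg hx.symm]; ring
    · refine ⟨a, b + 1, c, by ring, ?_, ?_⟩
      · rw [h, Multiset.count_replicate, if_neg hx]; ring
      · rw [h, Multiset.count_replicate_self]; ring
    · refine ⟨a, b, c + 1, by ring, ?_, ?_⟩
      · rw [h]; simp [Multiset.insert_eq_cons, Multiset.count_cons, hx.symm,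
          Multiset.count_singleton]; ring
      · rw [h]; simp [Multiset.insert_eq_cons, Multiset.count_cons, hx,
          Multiset.count_singleton]; ring

lemma order_le [Fintype G] (x : G) (hpos : 1 ≤ sSup (DeltaStar G)) :
    addOrderOf x ≤ sSup (DeltaStar G) + 2 := by
  classical
  by_cases h3 : addOrderOf x ≤ 2
  · omega
  have hx : -x ≠ x := by
    intro h
    apply h3
    apply Nat.le_of_dvd (by norm_num)
    apply addOrderOf_dvd_of_nsmul_eq_zero
    rw [two_nsmul]
    nth_rewrite 1 [← h]
    simp
  have hbdd : BddAbove (DeltaStar G) := by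
    apply Set.Finite.bddAbove
    apply (Set.finite_range (fun G₀ : Set G => sInf (DeltaSet G₀))).subset
    rintro e ⟨G₀, _, rfl⟩
    exact ⟨G₀, rfl⟩
  set n := addOrderOf x with hn
  set P : Set G := {x, -x} with hP
  have hne : (DeltaSet P).Nonempty := by
    have hax : IsAtomSeq P (Multiset.replicate n x) := atom_replicate (by simp [hP])
    have hay : IsAtomSeq P (Multiset.replicate n (-x)) := by
      have := atom_replicate (a := -x) (G₀ := P) (by simp [hP])
      rwa [addOrderOf_neg] at this
    have haz : IsAtomSeq P {x, -x} := by
      refine ⟨⟨fun y hy => by simpa [hP] using hy, by simp⟩, by simp, ?_⟩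
      intro A B hA hB hA0 hB0 h
      have hc := congrArg Multiset.card h
      have hc1 := Multiset.card_pos.2 hA0
      have hc2 := Multiset.card_pos.2 hB0
      simp only [Multiset.insert_eq_cons, Multiset.card_cons, Multiset.card_singleton,
        Multiset.card_add] at hc
      obtain ⟨y, rfl⟩ := Multiset.card_eq_one.1 (show Multiset.card A = 1 by omega)
      have hy0 : y = 0 := by simpa using hA.2
      have hyP : y ∈ P := hA.1 y (by simp)
      rw [hy0] at hyP
      have : x = 0 := by
        rcases hyP with h | h
        · exact h.symm
        · simpa using h.symm
      apply hx; simp [this]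
    have h2 : 2 ∈ LengthSet P (Multiset.replicate n x + Multiset.replicate n (-x)) := by
      refine ⟨{Multiset.replicate n x, Multiset.replicate n (-x)}, by simp, ?_, by simp⟩
      intro A hA
      simp only [Multiset.insert_eq_cons, Multiset.mem_cons, Multiset.mem_singleton] at hA
      rcases hA with rfl | rfl
      · exact hax
      · exact hay
    have hnl : n ∈ LengthSet P (Multiset.replicate n x + Multiset.replicate n (-x)) := by
      refine ⟨Multiset.replicate n {x, -x}, by simp, ?_, ?_⟩
      · intro A hA
        rw [Multiset.eq_of_mem_replicate hA]; exact haz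
      · rw [Multiset.sum_replicate, Multiset.insert_eq_cons, ← Multiset.singleton_add, smul_add,
          Multiset.nsmul_singleton, Multiset.nsmul_singleton]
    obtain ⟨e, he, _⟩ := gap_le (zs_add hax.1 hay.1)
      (by
        intro h
        exact hax.2.1 (add_eq_zero.1 h).1) h2 hnl (by omega)
    exact ⟨e, he⟩
  have hall : ∀ e ∈ DeltaSet P, n - 2 ≤ e := by
    rintro e ⟨B, hB, hB0, u, ⟨l1, hl1, hla1, hls1⟩, v, ⟨l2, hl2, hla2, hls2⟩, huv, he, _⟩
    obtain ⟨a, b, c, h1, h2, h3⟩ := fact_pm hx l1 hla1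
    obtain ⟨a', b', c', h1', h2', h3'⟩ := fact_pm hx l2 hla2
    rw [hls1] at h2 h3
    rw [hls2] at h2' h3'
    rw [← hn] at h2 h3 h2' h3'
    have hA : (n : ℤ) * a + c = n * a' + c' := by exact_mod_cast h2.symm.trans h2'
    have hBb : (n : ℤ) * b + c = n * b' + c' := by exact_mod_cast h3.symm.trans h3'
    have hn3 : (3 : ℤ) ≤ n := by exact_mod_cast (by omega : 3 ≤ n)
    have hab : (a : ℤ) - a' = b - b' := by
      have : (n : ℤ) * (a - a') = n * (b - b') := by linarith
      exact mul_left_cancel₀ (by linarith) this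
    have hdiff : (v : ℤ) - u = (n - 2) * (a - a') := by
      have e1 : (v : ℤ) = a' + b' + c' := by exact_mod_cast hl2.symm.trans h1'
      have e2 : (u : ℤ) = a + b + c := by exact_mod_cast hl1.symm.trans h1
      rw [e1, e2]
      linear_combination (-1 : ℤ) * hA + hab
    have huv' : (0 : ℤ) < v - u := by
      have : (u : ℤ) < v := by exact_mod_cast huv
      linarith
    have ht : (1 : ℤ) ≤ a - a' := by
      rw [hdiff] at huv'
      have h0 : (0 : ℤ) < a - a' := pos_of_mul_pos_right huv' (by linarith)
      linarith
    have : (n : ℤ) - 2 ≤ v - u := by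
      rw [hdiff]
      exact le_mul_of_one_le_right (by linarith) ht
    omega
  have hmem : sInf (DeltaSet P) ∈ DeltaStar G := ⟨P, hne, rfl⟩
  have h4 := le_csSup hbdd hmem
  have h5 := hall _ (Nat.sInf_mem hne)
  omega

lemma cover [DecidableEq G] : ∀ (n : ℕ) (U : Multiset G) (X : Multiset (Multiset G)),
    Multiset.card U = n → U ≤ X.sum →
    ∃ T ≤ X, Multiset.card T ≤ Multiset.card U ∧ U ≤ T.sum := by
  intro n
  induction n using Nat.strong_induction_on with
  | _ n ih =>
    intro U X hn hU
    by_cases h0 : U = 0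
    · exact ⟨0, by simp, by simp, by simp [h0]⟩
    obtain ⟨u, hu⟩ := Multiset.exists_mem_of_ne_zero h0
    obtain ⟨Z, hZ, huZ⟩ : ∃ Z ∈ X, u ∈ Z := by
      have := Multiset.mem_of_le hU hu
      rwa [mem_msum] at this
    obtain ⟨X', rfl⟩ := Multiset.exists_cons_of_mem hZ
    have hlt : Multiset.card (U - Z) < Multiset.card U := by
      have h1 : U - Z ≤ U.erase u := by
        rw [← Multiset.sub_singleton]
        exact tsub_le_tsub_left (Multiset.singleton_le.2 huZ) U
      have h2 := Multiset.card_le_card h1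
      have h3 := Multiset.card_erase_lt_of_mem hu
      omega
    obtain ⟨T, hT, hTc, hTU⟩ := ih _ (by omega) (U - Z) X' rfl
      (by rw [Multiset.sum_cons] at hU; exact tsub_le_iff_left.2 hU)
    refine ⟨Z ::ₘ T, Multiset.cons_le_cons Z hT, by rw [Multiset.card_cons]; omega, ?_⟩
    rw [Multiset.sum_cons]
    exact tsub_le_iff_left.1 hTU

lemma card_le_of_cross [Fintype G] (M : ℕ) (hM : ∀ x : G, addOrderOf x ≤ M) (U : Multiset G) :
    (Multiset.card U : ℚ) ≤ M * crossNumber U := by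
  induction U using Multiset.induction_on with
  | empty => simp [crossNumber]
  | cons a s ih =>
    rw [← Multiset.singleton_add, crossNumber_add, Multiset.card_add]
    have h1 : (addOrderOf a : ℚ) ≤ M := by exact_mod_cast hM a
    have h2 : (0 : ℚ) < addOrderOf a := by exact_mod_cast addOrderOf_pos a
    have h3 : (1 : ℚ) ≤ M * crossNumber ({a} : Multiset G) := by
      simp only [crossNumber, Multiset.map_singleton, Multiset.sum_singleton]
      rw [← div_eq_mul_inv, le_div_iff₀ h2]; linarith
    push_cast
    rw [mul_add, Multiset.card_singleton]
    push_cast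
    linarith

/-- Removing an atom of cross number one decreases the maximal length by at most one. -/
lemma remove_atom [Fintype G] {G₀ : Set G}
    (hmin : IsMinNonHalfFactorial G₀) (hLCN : IsLCNSet G₀)
    (hmax : sInf (DeltaSet G₀) = sSup (DeltaStar G))
    {U S : Multiset G} (hU : IsAtomSeq G₀ U) (hkU : crossNumber U = 1)
    (X : Multiset (Multiset G)) (hX : ∀ A ∈ X, IsAtomSeq G₀ A) (hXs : X.sum = S + U) :
    ∃ R : Multiset (Multiset G), (∀ A ∈ R, IsAtomSeq G₀ A) ∧ R.sum = S ∧
      Multiset.card X ≤ Multiset.card R + 1 := by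
  classical
  by_contra hcon
  push Not at hcon
  set m := sInf (DeltaSet G₀) with hm
  have hm1 : 1 ≤ m := delta_pos (Nat.sInf_mem hmin.1)
  have hord : ∀ x : G, addOrderOf x ≤ m + 2 := by
    intro x; rw [hmax]; exact order_le x (by rw [← hmax]; exact hm1)
  have hUc : Multiset.card U ≤ m + 2 := by
    have := card_le_of_cross (m + 2) hord U
    rw [hkU, mul_one] at this
    exact_mod_cast this
  -- analysis of an arbitrary cover
  have main : ∀ T ≤ X, U ≤ T.sum → Multiset.card T ≤ Multiset.card U →
      Multiset.card T = m + 2 ∧ Multiset.card U = m + 2 ∧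
      ∃ Y, IsAtomSeq G₀ Y ∧ T.sum = U + Y := by
    intro T hT hUT hTU
    obtain ⟨R, rfl⟩ := Multiset.le_iff_exists_add.1 hT
    obtain ⟨Y, hY⟩ := Multiset.le_iff_exists_add.1 hUT
    have hTat : ∀ A ∈ T, IsAtomSeq G₀ A := fun A hA => hX A (Multiset.mem_add.2 (Or.inl hA))
    have hRat : ∀ A ∈ R, IsAtomSeq G₀ A := fun A hA => hX A (Multiset.mem_add.2 (Or.inr hA))
    have hTz := zs_sum T (fun A hA => (hTat A hA).1)
    have hYz : IsZeroSumSeq G₀ Y := by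
      refine ⟨fun y hy => hTz.1 y (by rw [hY]; exact Multiset.mem_add.2 (Or.inr hy)), ?_⟩
      have := hTz.2
      rwa [hY, Multiset.sum_add, hU.1.2, zero_add] at this
    have hS : S = Y + R.sum := by
      rw [Multiset.sum_add, hY] at hXs
      have : U + (Y + R.sum) = U + S := by rw [← add_assoc, hXs, add_comm]
      exact (add_left_cancel this).symm
    obtain ⟨q, hq, hqs⟩ := exists_fact G₀ _ Y rfl hYz
    have hlen := hcon (q + R) (fun A hA => by
      rcases Multiset.mem_add.1 hA with h | h
      · exact hq A h
      · exact hRat A h) (by rw [Multiset.sum_add, hqs, hS])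
    rw [Multiset.card_add, Multiset.card_add] at hlen
    have hq1 : 1 ≤ Multiset.card q := by
      by_contra h
      have hq0 : q = 0 := Multiset.card_eq_zero.1 (by omega)
      have hY0 : Y = 0 := by rw [← hqs, hq0]; simp
      have := atom_length_one hU T hTat (by rw [hY, hY0, add_zero])
      rw [hq0, Multiset.card_zero] at hlen
      omega
    have hB : IsZeroSumSeq G₀ (S + U) := by
      rw [← hXs]; exact zs_sum _ (fun A hA => (hX A hA).1)
    have hB0 : S + U ≠ 0 := fun h => hU.2.1 (add_eq_zero.1 h).2
    have hp : Multiset.card q + Multiset.card R + 1 ∈ LengthSet G₀ (S + U) := by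
      refine ⟨U ::ₘ (q + R), by simp, fun A hA => ?_, ?_⟩
      · rcases Multiset.mem_cons.1 hA with rfl | hA
        · exact hU
        rcases Multiset.mem_add.1 hA with h | h
        · exact hq A h
        · exact hRat A h
      · rw [Multiset.sum_cons, Multiset.sum_add, hqs, hS, add_comm]
    obtain ⟨e, he, hle⟩ := gap_le hB hB0 hp ⟨T + R, rfl, hX, hXs⟩
      (by rw [Multiset.card_add]; omega)
    have hme : m ≤ e := Nat.sInf_le he
    rw [Multiset.card_add] at hle
    refine ⟨by omega, by omega, Y, ?_, hY⟩
    obtain ⟨Y', hY'⟩ := Multiset.card_eq_one.1 (show Multiset.card q = 1 by omega)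
    rw [hY', Multiset.sum_singleton] at hqs
    rw [← hqs]
    exact hq Y' (by rw [hY']; simp)
  -- every member of `X` meets `U` in at most one element
  have meet : ∀ Z ∈ X, Multiset.card U ≤ Multiset.card (U - Z) + 1 := by
    intro Z hZ
    by_contra h
    obtain ⟨X', hX'⟩ := Multiset.exists_cons_of_mem hZ
    obtain ⟨T, hT, hTc, hTU⟩ := cover _ (U - Z) X' rfl (by
      rw [tsub_le_iff_left, ← Multiset.sum_cons, ← hX', hXs]
      exact Multiset.le_add_left U S)
    have := main (Z ::ₘ T) (by rw [hX']; exact Multiset.cons_le_cons Z hT)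
      (by rw [Multiset.sum_cons]; exact tsub_le_iff_left.1 hTU)
      (by rw [Multiset.card_cons]; omega)
    rw [Multiset.card_cons] at this
    omega
  obtain ⟨T, hT, hTc, hTU⟩ := cover _ U X rfl (by rw [hXs]; exact Multiset.le_add_left U S)
  obtain ⟨hT1, hU1, Y, hYat, hTY⟩ := main T hT hTU hTc
  have hkY : 1 < crossNumber Y := by
    have h1 := crossNumber_sum_ge T (fun A hA => hLCN A (hX A (Multiset.mem_of_le hT hA)))
    rw [hTY, crossNumber_add, hkU, hT1] at h1
    push_cast at h1
    have : (1 : ℚ) ≤ m := by exact_mod_cast hm1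
    linarith
  have hfull : ∀ x ∈ G₀, x ∈ Y := by
    intro x hx
    by_contra h
    rw [atom_cross_one hmin hYat hx h] at hkY
    exact lt_irrefl _ hkY
  have hnle : ¬ U ≤ Y := by
    intro h
    obtain ⟨C, hC⟩ := Multiset.le_iff_exists_add.1 h
    have hC0 : C ≠ 0 := by
      rintro rfl
      rw [add_zero] at hC
      rw [hC, hkU] at hkY
      exact lt_irrefl _ hkY
    refine hYat.2.2 U C hU.1 ⟨fun y hy => hYat.1.1 y ?_, ?_⟩ hU.2.1 hC0 hC
    · rw [hC]; exact Multiset.mem_add.2 (Or.inr hy)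
    · have := hYat.1.2
      rwa [hC, Multiset.sum_add, hU.1.2, zero_add] at this
  rw [Multiset.le_iff_count] at hnle
  push Not at hnle
  obtain ⟨x, hx⟩ := hnle
  have hxU : x ∈ U := Multiset.count_pos.1 (by omega)
  have hxY : 1 ≤ Multiset.count x Y := Multiset.count_pos.2 (hfull x (hU.1.1 x hxU))
  obtain ⟨Z, hZT, hxZ⟩ : ∃ Z ∈ T, x ∈ Z := by
    have := Multiset.mem_of_le hTU hxU
    rwa [mem_msum] at this
  have hmeet := meet Z (Multiset.mem_of_le hT hZT)
  have hinter : Multiset.card (U ∩ Z) ≤ 1 := by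
    have h1 : U - Z + U ∩ Z = U := Multiset.sub_add_inter U Z
    have := congrArg Multiset.card h1
    rw [Multiset.card_add] at this
    omega
  have hxI : x ∈ U ∩ Z := Multiset.mem_inter.2 ⟨hxU, hxZ⟩
  have hI : U ∩ Z = {x} := by
    have h1 : ({x} : Multiset G) ≤ U ∩ Z := Multiset.singleton_le.2 hxI
    exact (Multiset.eq_of_le_of_card_le h1 (by simpa using hinter)).symm
  obtain ⟨T', rfl⟩ := Multiset.exists_cons_of_mem hZT
  have hUT' : U ≤ T'.sum := by
    rw [Multiset.le_iff_count]
    intro y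
    have hy := congrArg (Multiset.count y) hI
    rw [Multiset.count_inter] at hy
    have hy2 := congrArg (Multiset.count y) hTY
    rw [Multiset.sum_cons, Multiset.count_add, Multiset.count_add] at hy2
    by_cases hyx : y = x
    · subst hyx
      rw [Multiset.count_singleton_self] at hy
      omega
    · rw [Multiset.count_singleton, if_neg hyx] at hy
      omega
  have := main T' ((Multiset.le_cons_self T' Z).trans hT) hUT'
    (by rw [Multiset.card_cons] at hTc; omega)
  rw [Multiset.card_cons] at hT1
  omega

lemma length_le [Fintype G] {G₀ : Set G}
    (hmin : IsMinNonHalfFactorial G₀) (hLCN : IsLCNSet G₀)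
    (hmax : sInf (DeltaSet G₀) = sSup (DeltaStar G))
    {A : Multiset G} (hA : IsAtomSeq G₀ A) (F : Multiset (Multiset G)) :
    (∀ U ∈ F, IsAtomSeq G₀ U ∧ crossNumber U = 1) →
    ∀ X : Multiset (Multiset G), (∀ U ∈ X, IsAtomSeq G₀ U) → X.sum = A + F.sum →
    Multiset.card X ≤ Multiset.card F + 1 := by
  induction F using Multiset.induction_on with
  | empty =>
    intro _ X hX hXs
    rw [atom_length_one hA X hX (by simpa using hXs)]; simp
  | cons U s ih =>
    intro hF X hX hXs
    obtain ⟨R, hR, hRs, hRc⟩ := remove_atom hmin hLCN hmax (S := A + s.sum)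
      (hF U (by simp)).1 (hF U (by simp)).2 X hX
      (by rw [hXs, Multiset.sum_cons, add_assoc, add_comm U])
    have := ih (fun V hV => hF V (Multiset.mem_cons_of_mem hV)) R hR hRs
    rw [Multiset.card_cons]; omega

lemma cross_eq_of_balance [Fintype G] {G₀ : Set G}
    (hmin : IsMinNonHalfFactorial G₀) (hLCN : IsLCNSet G₀)
    (hmax : sInf (DeltaSet G₀) = sSup (DeltaStar G))
    {A₁ A₂ : Multiset G} (h₁ : IsAtomSeq G₀ A₁) (h₂ : IsAtomSeq G₀ A₂)
    (F₁ F₂ : Multiset (Multiset G))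
    (hF₁ : ∀ U ∈ F₁, IsAtomSeq G₀ U ∧ crossNumber U = 1)
    (hF₂ : ∀ U ∈ F₂, IsAtomSeq G₀ U ∧ crossNumber U = 1)
    (h : A₁ + F₁.sum = A₂ + F₂.sum) : crossNumber A₁ = crossNumber A₂ := by
  have e1 := length_le hmin hLCN hmax h₁ F₁ hF₁ (A₂ ::ₘ F₂) (fun U hU => by
    rcases Multiset.mem_cons.1 hU with rfl | hU
    · exact h₂
    · exact (hF₂ U hU).1) (by rw [Multiset.sum_cons, h])
  have e2 := length_le hmin hLCN hmax h₂ F₂ hF₂ (A₁ ::ₘ F₁) (fun U hU => by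
    rcases Multiset.mem_cons.1 hU with rfl | hU
    · exact h₁
    · exact (hF₁ U hU).1) (by rw [Multiset.sum_cons, h])
  rw [Multiset.card_cons] at e1 e2
  have hc : Multiset.card F₁ = Multiset.card F₂ := by omega
  have hk := congrArg crossNumber h
  rw [crossNumber_add, crossNumber_add, crossNumber_sum_of F₁ (fun U hU => (hF₁ U hU).2),
    crossNumber_sum_of F₂ (fun U hU => (hF₂ U hU).2), hc] at hk
  linarith

lemma fact_one [Fintype G] {G₀ : Set G} (hmin : IsMinNonHalfFactorial G₀)
    {B : Multiset G} (hB : IsZeroSumSeq G₀ B) {x : G} (hx : x ∈ G₀) (hxB : x ∉ B) :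
    ∃ F : Multiset (Multiset G), (∀ U ∈ F, IsAtomSeq G₀ U ∧ crossNumber U = 1) ∧ F.sum = B := by
  obtain ⟨F, hF, hFs⟩ := exists_fact G₀ _ B rfl hB
  refine ⟨F, fun U hU => ⟨hF U hU, atom_cross_one hmin (hF U hU) hx fun h => hxB ?_⟩, hFs⟩
  rw [← hFs, mem_msum]
  exact ⟨U, hU, h⟩

lemma exists_multiset_closure [Finite G] {E : Set G} {x : G} (hx : x ∈ AddSubgroup.closure E) :
    ∃ B : Multiset G, (∀ y ∈ B, y ∈ E) ∧ B.sum = x := by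
  have : x ∈ AddSubmonoid.closure E := by
    induction hx using AddSubgroup.closure_induction with
    | mem y hy => exact AddSubmonoid.subset_closure hy
    | zero => exact zero_mem _
    | add a b _ _ ha hb => exact add_mem ha hb
    | neg a _ ha =>
      have h0 := addOrderOf_pos a
      have h1 : -a = (addOrderOf a - 1) • a := by
        rw [neg_eq_iff_add_eq_zero, ← succ_nsmul', Nat.sub_add_cancel h0, addOrderOf_nsmul_eq_zero]
      rw [h1]
      exact nsmul_mem ha _
  exact AddSubmonoid.exists_multiset_of_mem_closure this

lemma cross_eq_aux [Fintype G] [DecidableEq G] {G₀ : Set G}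
    (hmin : IsMinNonHalfFactorial G₀) (hLCN : IsLCNSet G₀)
    (hmax : sInf (DeltaSet G₀) = sSup (DeltaStar G))
    {g : G} (hg : g ∈ G₀) {d : ℕ}
    (hdE : ∃ E : Set G, E ⊂ G₀ \ {g} ∧ d • g ∈ AddSubgroup.closure E)
    {A₁ A₂ : Multiset G} (h₁ : IsAtomSeq G₀ A₁) (h₂ : IsAtomSeq G₀ A₂)
    (hmod : A₁.count g ≡ A₂.count g [MOD d]) (hle : A₂.count g ≤ A₁.count g) :
    crossNumber A₁ = crossNumber A₂ := by
  obtain ⟨E, hE, hdg⟩ := hdE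
  obtain ⟨h, hhG, hhE⟩ := Set.exists_of_ssubset hE
  obtain ⟨B, hBE, hBs⟩ := exists_multiset_closure (neg_mem hdg)
  obtain ⟨z, hz⟩ := (Nat.modEq_iff_dvd' hle).1 hmod.symm
  have hgB : g ∉ B := fun hgB => (hE.1 (hBE g hgB)).2 rfl
  have hhg : h ≠ g := fun e => hhG.2 e
  set W : Multiset G := z • (Multiset.replicate d g + B) with hW
  have hWmem : ∀ y ∈ W, y = g ∨ y ∈ E := by
    intro y hy
    rcases Multiset.mem_add.1 (Multiset.mem_of_mem_nsmul hy) with h | h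
    · exact Or.inl (Multiset.eq_of_mem_replicate h)
    · exact Or.inr (hBE y h)
  have hWz : IsZeroSumSeq G₀ W := by
    refine ⟨fun y hy => ?_, ?_⟩
    · rcases hWmem y hy with rfl | h
      · exact hg
      · exact (hE.1 h).1
    · rw [hW, Multiset.sum_nsmul, Multiset.sum_add, Multiset.sum_replicate, hBs]; simp
  have hhW : h ∉ W := by
    intro hh
    rcases hWmem h hh with e | e
    · exact hhg e
    · exact hhE e
  have hWc : W.count g = d * z := by
    rw [hW, Multiset.count_nsmul, Multiset.count_add, Multiset.count_replicate_self,
      Multiset.count_eq_zero_of_notMem hgB]; ring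
  obtain ⟨FW, hFW, hFWs⟩ := fact_one hmin hWz hhG.1 hhW
  set v := A₁.count g with hv
  have hC2z : IsZeroSumSeq G₀ (A₂ + W) := zs_add h₂.1 hWz
  have hsplit : ∀ A : Multiset G, A.count g = v → IsZeroSumSeq G₀ A →
      ∃ D, A = Multiset.replicate v g + D ∧ (∀ y ∈ D, y ∈ G₀) ∧ g ∉ D ∧ D.sum = -(v • g) := by
    intro A hA hAz
    have e : A = Multiset.replicate v g + A.filter (fun y => ¬ y = g) := by
      conv_lhs => rw [← Multiset.filter_add_not (fun y => y = g) A]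
      rw [Multiset.filter_eq', hA]
    refine ⟨A.filter (fun y => ¬ y = g), e, ?_, ?_, ?_⟩
    · intro y hy; exact hAz.1 y (Multiset.mem_of_mem_filter hy)
    · intro hh; exact (Multiset.mem_filter.1 hh).2 rfl
    · have := hAz.2
      rw [e, Multiset.sum_add, Multiset.sum_replicate] at this
      exact eq_neg_of_add_eq_zero_right this
  obtain ⟨D, hD, hDG, hgD, hDs⟩ := hsplit A₁ rfl h₁.1
  obtain ⟨C, hC, hCG, hgC, hCs⟩ := hsplit (A₂ + W)
    (by rw [Multiset.count_add, hWc]; omega) hC2z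
  set N := Fintype.card G with hN
  have hNpos : 0 < N := Fintype.card_pos
  have hV2 : IsZeroSumSeq G₀ (N • D) := by
    refine ⟨fun y hy => hDG y (Multiset.mem_of_mem_nsmul hy), ?_⟩
    rw [Multiset.sum_nsmul, hN, card_nsmul_eq_zero]
  have hND : N • D = D + (N - 1) • D := by
    rw [← succ_nsmul', Nat.sub_add_cancel hNpos]
  have hV1 : IsZeroSumSeq G₀ (C + (N - 1) • D) := by
    refine ⟨fun y hy => ?_, ?_⟩
    · rcases Multiset.mem_add.1 hy with h | h
      · exact hCG y h
      · exact hDG y (Multiset.mem_of_mem_nsmul h)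
    · have := hV2.2
      rw [hND, Multiset.sum_add, hDs] at this
      rw [Multiset.sum_add, hCs, this]
  obtain ⟨F1, hF1, hF1s⟩ := fact_one hmin hV1 hg (by
    intro h
    rcases Multiset.mem_add.1 h with h | h
    · exact hgC h
    · exact hgD (Multiset.mem_of_mem_nsmul h))
  obtain ⟨F2, hF2, hF2s⟩ := fact_one hmin hV2 hg (fun h => hgD (Multiset.mem_of_mem_nsmul h))
  refine cross_eq_of_balance hmin hLCN hmax h₁ h₂ F1 (FW + F2) hF1 (fun U hU => ?_) ?_
  · rcases Multiset.mem_add.1 hU with h | h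
    · exact hFW U h
    · exact hF2 U h
  · rw [Multiset.sum_add, hF1s, hFWs, hF2s, ← add_assoc A₂, hC, hND, hD]
    abel

end Helpers

/-- With `G₀` a minimal non-half-factorial LCN-set with
`min Δ(G₀) = max Δ*(G)`, `g ∈ G₀` with `g ∈ ⟨G₀ \ {g}⟩`, and `d ∈ [1, ord(g)]` minimal
such that `d·g ∈ ⟨E⟩` for some proper subset `E ⊊ G₀ \ {g}`: then `d ∣ ord(g)`, and atoms
`A₁, A₂` over `G₀` with `v_g(A₁) ≡ v_g(A₂) (mod d)` have equal cross numbers. -/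
theorem stmt_16 {G : Type*} [AddCommGroup G] [Fintype G] [DecidableEq G] (G₀ : Set G)
    (hmin : IsMinNonHalfFactorial G₀) (hLCN : IsLCNSet G₀)
    (hmax : sInf (DeltaSet G₀) = sSup (DeltaStar G))
    (g : G) (hg : g ∈ G₀) (hgen : g ∈ AddSubgroup.closure (G₀ \ {g}))
    (d : ℕ) (hd1 : 1 ≤ d) (hd2 : d ≤ addOrderOf g)
    (hdE : ∃ E : Set G, E ⊂ G₀ \ {g} ∧ d • g ∈ AddSubgroup.closure E)
    (hdmin : ∀ d' : ℕ, 1 ≤ d' → d' < d →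
      ¬ ∃ E : Set G, E ⊂ G₀ \ {g} ∧ d' • g ∈ AddSubgroup.closure E) :
    d ∣ addOrderOf g ∧
    ∀ A₁ A₂ : Multiset G, IsAtomSeq G₀ A₁ → IsAtomSeq G₀ A₂ →
      A₁.count g ≡ A₂.count g [MOD d] → crossNumber A₁ = crossNumber A₂ := by
  refine ⟨?_, fun A₁ A₂ h₁ h₂ hmod => ?_⟩
  · obtain ⟨E, hE, hdg⟩ := hdE
    have hmem : (Nat.gcd d (addOrderOf g)) • g ∈ AddSubgroup.closure E := by
      have hb := Nat.gcd_eq_gcd_ab d (addOrderOf g)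
      have h0 : (addOrderOf g) • g = 0 := addOrderOf_nsmul_eq_zero g
      have : (Nat.gcd d (addOrderOf g)) • g = (Nat.gcdA d (addOrderOf g)) • (d • g) := by
        rw [← natCast_zsmul, hb, add_smul, mul_comm (d : ℤ), mul_comm (addOrderOf g : ℤ), mul_smul,
          mul_smul, natCast_zsmul, natCast_zsmul, h0, smul_zero, add_zero]
      rw [this]
      exact AddSubgroup.zsmul_mem _ hdg _
    have hpos : 1 ≤ Nat.gcd d (addOrderOf g) := Nat.gcd_pos_of_pos_left _ hd1
    have hle : d ≤ Nat.gcd d (addOrderOf g) := by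
      by_contra hlt
      exact hdmin _ hpos (not_le.1 hlt) ⟨E, hE, hmem⟩
    have heq : Nat.gcd d (addOrderOf g) = d :=
      le_antisymm (Nat.le_of_dvd hd1 (Nat.gcd_dvd_left _ _)) hle
    rw [← heq]
    exact Nat.gcd_dvd_right _ _
  · rcases le_total (A₂.count g) (A₁.count g) with h | h
    · exact cross_eq_aux hmin hLCN hmax hg hdE h₁ h₂ hmod h
    · exact (cross_eq_aux hmin hLCN hmax hg hdE h₂ h₁ hmod.symm h).symm
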